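/- Let Y be a nonempty finite set, τ > 0, and r : Y → ℝ a reward function with Z = Σ_y exp(r(y)/τ) and q = softmax_τ(r). Let s : Y → ℝ and p = softmax_τ(s). Then there exist α ∈ [0, 1/2] and β ∈ [0, 1/2] such that, with a = (1−α)·s + α·r and b = (1−β)·r + β·s, the entropy-regularized negative expected reward satisfies −τ·H(p) − Σ_y p(y)·r(y) = τ·(−Σ_y q(y)·log p(y)) + (1/(4τ))·(Var_{y∼softmax_τ(a)}[s(y) − r(y)] − Var_{y∼softmax_τ(b)}[s(y) − r(y)]) − τ·(H(q) + log Z). -/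

import Mathlib

/-!
Along the segment `r + t (s - r)` from `r` to `s`, let `F t = τ log ∑ exp ((r + t (s - r)) / τ)` be
the log-partition function. Its derivative is the mean of `s - r` under the tilted distribution
(`hasDerivAt_logPartition`) and its second derivative is the variance divided by `τ`
(`hasDerivAt_tiltedMean`). Both objectives are expressible through `F` and `F'` at the endpoints,
because `τ log (softmax τ u) = u - τ log ∑ exp (u / τ)`, and their difference is the trapezoid error
`F' 1 + F' 0 - 2 (F 1 - F 0) = G 1 - G 0`, where `G t = (2 t - 1) F' t - 2 F t`.

Since `G' t = (2 t - 1) F'' t`, Cauchy's mean value theorem against `(t - 1/2)²` on each of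
`[1/2, 1]` and `[0, 1/2]` gives `G 1 - G (1/2) = F'' c / 4` and `G (1/2) - G 0 = -F'' c' / 4`; then
`α = 1 - c` and `β = c'` (`exists_trapezoid_error`).
-/

open Finset Set

/-- `softmax τ u` is the probability distribution proportional to `exp (u y / τ)`. -/
noncomputable def softmax {Y : Type*} [Fintype Y] (τ : ℝ) (u : Y → ℝ) (y : Y) : ℝ :=
  Real.exp (u y / τ) / ∑ y', Real.exp (u y' / τ)

/-- Shannon entropy of a distribution on a finite set (`0 * log 0 = 0` by convention). -/
noncomputable def entropy {Y : Type*} [Fintype Y] (p : Y → ℝ) : ℝ :=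
  -∑ y, p y * Real.log (p y)

/-- Variance of `g` under the distribution `μ` on a finite set. -/
noncomputable def var {Y : Type*} [Fintype Y] (μ g : Y → ℝ) : ℝ :=
  (∑ y, μ y * (g y) ^ 2) - (∑ y, μ y * g y) ^ 2

/-- The trapezoid error of `F'` on `[0, 1]` as a difference of two second derivatives, one sampled
in each half of the interval. -/
lemma exists_trapezoid_error (F F' F'' : ℝ → ℝ) (h1 : ∀ t, HasDerivAt F (F' t) t)
    (h2 : ∀ t, HasDerivAt F' (F'' t) t) :
    ∃ c ∈ Icc (1 / 2 : ℝ) 1, ∃ c' ∈ Icc (0 : ℝ) (1 / 2),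
      F' 1 + F' 0 - 2 * (F 1 - F 0) = (F'' c - F'' c') / 4 := by
  have hG : ∀ t, HasDerivAt (fun t => (2 * t - 1) * F' t - 2 * F t) ((2 * t - 1) * F'' t) t := by
    intro t
    have hlin : HasDerivAt (fun t : ℝ => 2 * t - 1) 2 t := by
      simpa using ((hasDerivAt_id t).const_mul 2).sub_const 1
    exact ((hlin.mul (h2 t)).sub ((h1 t).const_mul 2)).congr_deriv (by ring)
  -- The derivative of `(t - 1/2)²` is the weight `2 t - 1` in `hG`, so the weight cancels below.
  have hQ : ∀ t, HasDerivAt (fun t : ℝ => (t - 1 / 2) ^ 2) (2 * t - 1) t := by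
    intro t
    exact (((hasDerivAt_id t).sub_const (1 / 2)).pow 2).congr_deriv (by simp; ring)
  have key : ∀ a b : ℝ, a < b → (∀ c ∈ Ioo a b, 2 * c - 1 ≠ 0) → ∃ c ∈ Ioo a b,
      ((2 * b - 1) * F' b - 2 * F b) - ((2 * a - 1) * F' a - 2 * F a)
        = ((b - 1 / 2) ^ 2 - (a - 1 / 2) ^ 2) * F'' c := by
    intro a b hab hne
    obtain ⟨c, hc, h⟩ := exists_ratio_hasDerivAt_eq_ratio_slope _ _ hab
      (fun t _ => (hG t).continuousAt.continuousWithinAt) (fun t _ => hG t) _ _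
      (fun t _ => (hQ t).continuousAt.continuousWithinAt) (fun t _ => hQ t)
    refine ⟨c, hc, mul_right_cancel₀ (hne c hc) ?_⟩
    linear_combination -h
  obtain ⟨c, hc, h⟩ := key (1 / 2) 1 (by norm_num) (fun c hc => by linarith [hc.1] |> ne_of_gt)
  obtain ⟨c', hc', h'⟩ := key 0 (1 / 2) (by norm_num) (fun c hc => by linarith [hc.2] |> ne_of_lt)
  exact ⟨c, Ioo_subset_Icc_self hc, c', Ioo_subset_Icc_self hc', by linear_combination h + h'⟩

lemma hasDerivAt_exp_segment {Y : Type*} (τ : ℝ) (r d : Y → ℝ) (y : Y) (t : ℝ) :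
    HasDerivAt (fun t => Real.exp ((r y + t * d y) / τ))
      (Real.exp ((r y + t * d y) / τ) * (d y / τ)) t := by
  have h : HasDerivAt (fun t => (r y + t * d y) / τ) (d y / τ) t := by
    simpa using (((hasDerivAt_id t).mul_const (d y)).const_add (r y)).div_const τ
  exact h.exp

lemma sum_softmax_mul {Y : Type*} [Fintype Y] (τ : ℝ) (u g : Y → ℝ) :
    ∑ y, softmax τ u y * g y = (∑ y, Real.exp (u y / τ) * g y) / ∑ y, Real.exp (u y / τ) := by
  rw [Finset.sum_div]
  exact Finset.sum_congr rfl fun _ _ => by rw [softmax]; ring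

section Softmax

variable {Y : Type*} [Fintype Y] [Nonempty Y]

lemma partition_pos (τ : ℝ) (u : Y → ℝ) : 0 < ∑ y, Real.exp (u y / τ) :=
  Finset.sum_pos (fun _ _ => Real.exp_pos _) Finset.univ_nonempty

lemma sum_softmax (τ : ℝ) (u : Y → ℝ) : ∑ y, softmax τ u y = 1 := by
  simp only [softmax, ← Finset.sum_div]
  exact div_self (partition_pos τ u).ne'

lemma mul_log_softmax {τ : ℝ} (hτ : τ ≠ 0) (u : Y → ℝ) (y : Y) :
    τ * Real.log (softmax τ u y) = u y - τ * Real.log (∑ y, Real.exp (u y / τ)) := by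
  rw [softmax, Real.log_div (Real.exp_pos _).ne' (partition_pos τ u).ne', Real.log_exp]
  field_simp

/-- The negated cross-entropy of `softmax τ v` relative to `softmax τ u`, scaled by `τ`. Taking
`u = v` gives the negated entropy, so this evaluates every logarithmic term of both objectives. -/
lemma mul_cross_entropy {τ : ℝ} (hτ : τ ≠ 0) (u v : Y → ℝ) :
    τ * ∑ y, softmax τ u y * Real.log (softmax τ v y)
      = ∑ y, softmax τ u y * v y - τ * Real.log (∑ y, Real.exp (v y / τ)) := by
  calc _ = ∑ y, softmax τ u y * (τ * Real.log (softmax τ v y)) := by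
        rw [Finset.mul_sum]; exact Finset.sum_congr rfl fun _ _ => by ring
    _ = _ := by
        simp only [mul_log_softmax hτ, mul_sub, Finset.sum_sub_distrib, ← Finset.sum_mul,
          sum_softmax, one_mul]

lemma hasDerivAt_logPartition {τ : ℝ} (hτ : τ ≠ 0) (r d : Y → ℝ) (t : ℝ) :
    HasDerivAt (fun t => τ * Real.log (∑ y, Real.exp ((r y + t * d y) / τ)))
      (∑ y, softmax τ (fun y => r y + t * d y) y * d y) t := by
  have hS := partition_pos τ (fun y => r y + t * d y)
  have h := ((HasDerivAt.fun_sum (u := Finset.univ)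
    fun y _ => hasDerivAt_exp_segment τ r d y t).log hS.ne').const_mul τ
  refine h.congr_deriv ?_
  rw [sum_softmax_mul]
  simp only [← mul_div_assoc, ← Finset.sum_div]
  field_simp

lemma hasDerivAt_tiltedMean {τ : ℝ} (hτ : τ ≠ 0) (r d : Y → ℝ) (t : ℝ) :
    HasDerivAt (fun t => ∑ y, softmax τ (fun y => r y + t * d y) y * d y)
      (var (softmax τ (fun y => r y + t * d y)) d / τ) t := by
  have hS := partition_pos τ (fun y => r y + t * d y)
  simp only [var, sum_softmax_mul, sum_softmax_mul τ _ (fun y => d y ^ 2)]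
  have h0 := HasDerivAt.fun_sum (u := Finset.univ) fun y _ => hasDerivAt_exp_segment τ r d y t
  have h1 := HasDerivAt.fun_sum (u := Finset.univ)
    fun y _ => (hasDerivAt_exp_segment τ r d y t).mul_const (d y)
  refine (h1.fun_div h0 hS.ne').congr_deriv ?_
  have e1 : ∑ y, Real.exp ((r y + t * d y) / τ) * (d y / τ) * d y
      = (∑ y, Real.exp ((r y + t * d y) / τ) * d y ^ 2) / τ := by
    rw [Finset.sum_div]; exact Finset.sum_congr rfl fun _ _ => by ring
  rw [e1]
  simp only [← mul_div_assoc, ← Finset.sum_div]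
  field_simp

end Softmax

theorem rl_eq_raml_plus_variance_gap {Y : Type*} [Fintype Y] [Nonempty Y]
    (τ : ℝ) (hτ : 0 < τ) (r : Y → ℝ)
    (Z : ℝ) (hZ : Z = ∑ y, Real.exp (r y / τ))
    (q : Y → ℝ) (hq : q = softmax τ r)
    (s : Y → ℝ) (p : Y → ℝ) (hp : p = softmax τ s) :
    ∃ α ∈ Icc (0:ℝ) (1/2), ∃ β ∈ Icc (0:ℝ) (1/2),
      -τ * entropy p - ∑ y, p y * r y
        = τ * (-∑ y, q y * Real.log (p y))
          + (1 / (4 * τ)) *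
              (var (softmax τ (fun y => (1 - α) * s y + α * r y)) (fun y => s y - r y)
               - var (softmax τ (fun y => (1 - β) * r y + β * s y)) (fun y => s y - r y))
          - τ * (entropy q + Real.log Z) := by
  have hne := hτ.ne'
  obtain ⟨c, hc, c', hc', h⟩ := exists_trapezoid_error _ _ _
    (hasDerivAt_logPartition hne r (fun y => s y - r y))
    (hasDerivAt_tiltedMean hne r (fun y => s y - r y))
  refine ⟨1 - c, ⟨by linarith [hc.2], by linarith [hc.1]⟩, c', hc', ?_⟩
  have ea : (fun y => (1 - (1 - c)) * s y + (1 - c) * r y) = fun y => r y + c * (s y - r y) := by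
    funext y; ring
  have eb : (fun y => (1 - c') * r y + c' * s y) = fun y => r y + c' * (s y - r y) := by
    funext y; ring
  rw [ea, eb]
  -- At the endpoints `0` and `1` the segment passes through `r` and `s`.
  simp only [one_mul, zero_mul, add_zero, add_sub_cancel, mul_sub (softmax _ _ _),
    Finset.sum_sub_distrib] at h
  subst hZ hq hp
  have hpp := mul_cross_entropy hne s s
  have hqp := mul_cross_entropy hne r s
  have hqq := mul_cross_entropy hne r r
  have hv : ∀ A B : ℝ, 1 / (4 * τ) * (A - B) = (A / τ - B / τ) / 4 := by
    intro A B; field_simp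
  rw [hv, entropy, entropy]
  linear_combination h + hpp + hqp - hqq
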